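/- The map φ : F(X,Ω) → M(X,Ω), defined on trees recursively by φ(leaf x) = x and φ(node ω (T₁,…,T_k)) = ⌊_ω φ(T₁)⋯φ(T_k) ⌋_ω, and on forests by φ(T₁,…,T_b) = φ(T₁)⋯φ(T_b), is injective, has image exactly S(X,Ω), satisfies φ(F · F') = φ(F)φ(F') for concatenation of forests, and satisfies φ(B_ω(F)) = P_ω(φ(F)) for every forest F and ω ∈ Ω. Hence φ is an isomorphism of Ω-operated semigroups from F(X,Ω) onto S(X,Ω). -/

import Mathlib

/-- The left bracket letter `⌊_ω` as a one-letter word. -/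
def lbr {X Ω : Type*} (ω : Ω) : FreeMonoid (X ⊕ (Ω ⊕ Ω)) :=
  FreeMonoid.of (Sum.inr (Sum.inl ω))

/-- The right bracket letter `⌋_ω` as a one-letter word. -/
def rbr {X Ω : Type*} (ω : Ω) : FreeMonoid (X ⊕ (Ω ⊕ Ω)) :=
  FreeMonoid.of (Sum.inr (Sum.inr ω))

/-- The operator `P_ω` on the free monoid: `P_ω w = ⌊_ω w ⌋_ω`. -/
def Pop {X Ω : Type*} (ω : Ω) (w : FreeMonoid (X ⊕ (Ω ⊕ Ω))) : FreeMonoid (X ⊕ (Ω ⊕ Ω)) :=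
  lbr ω * w * rbr ω

/-- `S(X,Ω)`: the smallest subset of the free monoid containing all one-letter words `x`
(`x ∈ X`), closed under concatenation and all operators `P_ω`. -/
inductive IsSW (X Ω : Type*) : FreeMonoid (X ⊕ (Ω ⊕ Ω)) → Prop
  | letter (x : X) : IsSW X Ω (FreeMonoid.of (Sum.inl x))
  | mul {u v : FreeMonoid (X ⊕ (Ω ⊕ Ω))} : IsSW X Ω u → IsSW X Ω v → IsSW X Ω (u * v)
  | op (ω : Ω) {u : FreeMonoid (X ⊕ (Ω ⊕ Ω))} : IsSW X Ω u → IsSW X Ω (Pop ω u)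

mutual
  /-- `(X,Ω)`-decorated planar rooted trees. -/
  inductive PTree (X : Type u) (Ω : Type v) : Type (max u v)
    | leaf : X → PTree X Ω
    | node : Ω → PForest X Ω → PTree X Ω

  /-- `(X,Ω)`-decorated planar rooted forests: nonempty finite ordered lists of trees. -/
  inductive PForest (X : Type u) (Ω : Type v) : Type (max u v)
    | single : PTree X Ω → PForest X Ω
    | cons : PTree X Ω → PForest X Ω → PForest X Ω
end

/-- Concatenation of forests. -/
def PForest.mul {X : Type u} {Ω : Type v} : PForest X Ω → PForest X Ω → PForest X Ω
  | .single t, G => .cons t G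
  | .cons t F, G => .cons t (PForest.mul F G)

instance {X : Type u} {Ω : Type v} : Mul (PForest X Ω) := ⟨PForest.mul⟩

theorem PForest.mul_assoc {X : Type u} {Ω : Type v} :
    ∀ a b c : PForest X Ω, a * b * c = a * (b * c)
  | .single _, _, _ => rfl
  | .cons t F, b, c => congrArg (PForest.cons t) (PForest.mul_assoc F b c)

instance {X : Type u} {Ω : Type v} : Semigroup (PForest X Ω) where
  mul_assoc := PForest.mul_assoc

mutual
  /-- The word associated to a tree: `φ(leaf x) = x`,
  `φ(node ω (T₁,…,T_k)) = ⌊_ω φ(T₁)⋯φ(T_k) ⌋_ω`. -/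
  def PTree.toWord {X : Type u} {Ω : Type v} : PTree X Ω → FreeMonoid (X ⊕ (Ω ⊕ Ω))
    | .leaf x => FreeMonoid.of (Sum.inl x)
    | .node ω F => Pop ω F.toWord

  /-- The word associated to a forest: `φ(T₁,…,T_b) = φ(T₁)⋯φ(T_b)`. -/
  def PForest.toWord {X : Type u} {Ω : Type v} : PForest X Ω → FreeMonoid (X ⊕ (Ω ⊕ Ω))
    | .single t => t.toWord
    | .cons t F => t.toWord * F.toWord
end

/-!
Injectivity of `φ` comes from a parser. Reading a word from right to left with a stack of forests,
the word `φ(F)` of a forest `F` has the net effect of multiplying the top forest of any nonempty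
stack by `F` on the left: the closing bracket of a node opens an empty forest on top, the word of
its children fills it, and the opening bracket grafts it and returns it to the forest below. Started
on a single empty forest, the parser therefore ends with exactly `F`. Adjoining a unit to `F(X,Ω)`
supplies the empty forest.
-/

section

variable {X : Type u} {Ω : Type v}

theorem PForest.single_mul (t : PTree X Ω) (F : PForest X Ω) : single t * F = cons t F := rfl

theorem PForest.cons_mul (t : PTree X Ω) (F G : PForest X Ω) : cons t F * G = cons t (F * G) := rfl

theorem PForest.toWord_single_node (ω : Ω) (F : PForest X Ω) :
    (single (.node ω F)).toWord = Pop ω F.toWord := by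
  rw [toWord, PTree.toWord]

theorem PForest.toWord_mul : ∀ F G : PForest X Ω, (F * G).toWord = F.toWord * G.toWord
  | .single t, G => by rw [single_mul, toWord, toWord]
  | .cons t F, G => by rw [cons_mul, toWord, toWord, toWord_mul F G, _root_.mul_assoc]

mutual
  theorem PTree.isSW_toWord : ∀ t : PTree X Ω, IsSW X Ω t.toWord
    | .leaf x => by rw [PTree.toWord]; exact .letter x
    | .node ω F => by rw [PTree.toWord]; exact .op ω F.isSW_toWord

  theorem PForest.isSW_toWord : ∀ F : PForest X Ω, IsSW X Ω F.toWord
    | .single t => by rw [PForest.toWord]; exact t.isSW_toWord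
    | .cons t F => by rw [PForest.toWord]; exact .mul t.isSW_toWord F.isSW_toWord
end

theorem IsSW.exists_toWord_eq {w : FreeMonoid (X ⊕ (Ω ⊕ Ω))} (hw : IsSW X Ω w) :
    ∃ F : PForest X Ω, F.toWord = w := by
  induction hw with
  | letter x => exact ⟨.single (.leaf x), by rw [PForest.toWord, PTree.toWord]⟩
  | mul _ _ ihu ihv =>
    obtain ⟨F, rfl⟩ := ihu
    obtain ⟨G, rfl⟩ := ihv
    exact ⟨F * G, F.toWord_mul G⟩
  | op ω _ ih =>
    obtain ⟨F, rfl⟩ := ih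
    exact ⟨.single (.node ω F), F.toWord_single_node ω⟩

theorem PForest.range_toWord : Set.range (toWord (X := X) (Ω := Ω)) = {w | IsSW X Ω w} :=
  Set.Subset.antisymm (Set.range_subset_iff.2 isSW_toWord) fun _ hw => hw.exists_toWord_eq

/-- The grafting operator `B_ω` on possibly empty forests, the empty forest being the adjoined
unit `1`. The empty forest cannot be grafted; it is sent to the junk value `1`. -/
def PForest.graft (ω : Ω) : WithOne (PForest X Ω) → WithOne (PForest X Ω) :=
  WithOne.recOneCoe 1 fun F => (single (.node ω F) : PForest X Ω)

theorem PForest.graft_coe (ω : Ω) (F : PForest X Ω) :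
    graft ω (F : WithOne (PForest X Ω)) = (single (.node ω F) : PForest X Ω) := rfl

/-- The states of the right-to-left parser `ForestStack.parse`: one possibly empty forest for each
bracket still open, innermost first, followed by the forest outside all brackets. -/
abbrev ForestStack (X : Type u) (Ω : Type v) : Type (max u v) := List (WithOne (PForest X Ω))

namespace ForestStack

open PForest (single graft)

/-- One step of the parser: `x` prepends a leaf to the top forest, `⌋_ω` opens an empty forest, and
`⌊_ω` grafts the top forest and prepends the resulting tree to the next one. The decoration of `⌋_ω`
is ignored, and stacks too short for the letter are left unchanged. -/
def parseLetter : X ⊕ (Ω ⊕ Ω) → Function.End (ForestStack X Ω)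
  | .inl x, P :: s => (single (.leaf x) : PForest X Ω) * P :: s
  | .inr (.inl ω), P :: Q :: s => graft ω P * Q :: s
  | .inr (.inr _), s => 1 :: s
  | _, s => s

/-- The parser, as the action of words on stacks generated by `parseLetter`. The product of
`Function.End` is composition, so the rightmost letter acts first. -/
def parse : FreeMonoid (X ⊕ (Ω ⊕ Ω)) →* Function.End (ForestStack X Ω) :=
  FreeMonoid.lift parseLetter

theorem parse_mul_apply (u v : FreeMonoid (X ⊕ (Ω ⊕ Ω))) (s : ForestStack X Ω) :
    parse (u * v) s = parse u (parse v s) :=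
  congrFun (map_mul parse u v) s

theorem parse_of_inl (x : X) (P : WithOne (PForest X Ω)) (s : ForestStack X Ω) :
    parse (.of (.inl x)) (P :: s) = (single (.leaf x) : PForest X Ω) * P :: s := by
  rw [parse, FreeMonoid.lift_eval_of, parseLetter]

theorem parse_lbr (ω : Ω) (P Q : WithOne (PForest X Ω)) (s : ForestStack X Ω) :
    parse (lbr ω) (P :: Q :: s) = graft ω P * Q :: s := by
  rw [parse, lbr, FreeMonoid.lift_eval_of, parseLetter]

theorem parse_rbr (ω : Ω) (s : ForestStack X Ω) : parse (rbr ω) s = 1 :: s := by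
  rw [parse, rbr, FreeMonoid.lift_eval_of, parseLetter]

mutual
  theorem parse_toWord_tree : ∀ (t : PTree X Ω) (P : WithOne (PForest X Ω)) (s : ForestStack X Ω),
      parse t.toWord (P :: s) = (single t : PForest X Ω) * P :: s
    | .leaf x, P, s => by rw [PTree.toWord, parse_of_inl]
    | .node ω F, P, s => by
      rw [PTree.toWord, Pop, parse_mul_apply, parse_mul_apply, parse_rbr, parse_toWord F, mul_one,
        parse_lbr, PForest.graft_coe]

  theorem parse_toWord : ∀ (F : PForest X Ω) (P : WithOne (PForest X Ω)) (s : ForestStack X Ω),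
      parse F.toWord (P :: s) = F * P :: s
    | .single t, P, s => by rw [PForest.toWord, parse_toWord_tree t]
    | .cons t F, P, s => by
      rw [PForest.toWord, parse_mul_apply, parse_toWord F, parse_toWord_tree t, ← mul_assoc,
        ← WithOne.coe_mul, PForest.single_mul]
end

theorem parse_toWord_singleton_one (F : PForest X Ω) :
    parse F.toWord [1] = [(F : WithOne (PForest X Ω))] := by
  rw [parse_toWord, mul_one]

end ForestStack

theorem PForest.toWord_injective : Function.Injective (toWord (X := X) (Ω := Ω)) := by
  intro F G h
  have hFG : [(F : WithOne (PForest X Ω))] = [(G : WithOne (PForest X Ω))] := by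
    rw [← ForestStack.parse_toWord_singleton_one, h, ForestStack.parse_toWord_singleton_one]
  exact WithOne.coe_injective (List.singleton_injective hFG)

end

/-- The map `φ : F(X,Ω) → M(X,Ω)` is injective with image exactly `S(X,Ω)`, sends
concatenation of forests to concatenation of words, and intertwines the grafting
operators `B_ω` with the operators `P_ω`.  Hence it is an isomorphism of `Ω`-operated
semigroups from `F(X,Ω)` onto `S(X,Ω)`. -/
theorem forest_toWord_iso_onto_SW (X : Type u) (Ω : Type v) [Nonempty X] [Nonempty Ω] :
    Function.Injective (PForest.toWord (X := X) (Ω := Ω)) ∧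
    Set.range (PForest.toWord (X := X) (Ω := Ω)) = {w | IsSW X Ω w} ∧
    (∀ F G : PForest X Ω, (F * G).toWord = F.toWord * G.toWord) ∧
    ∀ (ω : Ω) (F : PForest X Ω),
      (PForest.single (PTree.node ω F)).toWord = Pop ω F.toWord :=
  ⟨PForest.toWord_injective, PForest.range_toWord, PForest.toWord_mul,
    fun ω F => F.toWord_single_node ω⟩
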